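/- Let m be a positive integer, 𝒜 : ℝ → Matrix (Fin m) (Fin m) ℂ with every entry function t ↦ 𝒜 t i j integrable on ℝ, and φ : (Fin m → ℝ) → (Fin m → Fin m) → ℂ with every component t ↦ φ t j integrable with respect to Lebesgue product measure on Fin m → ℝ. Define the m-fold matrix convolution φ̃ (r : Fin m → ℝ) (i : Fin m → Fin m) := Σ over j : Fin m → Fin m of ∫ t : (Fin m → ℝ), (∏ k : Fin m, 𝒜 (r k - t k) (i k) (j k)) * φ t j. Define unnormalized Fourier transforms 𝒜̂ ω := ∫ t : ℝ, Complex.exp (-Complex.I * ω * t) • 𝒜 t, φ̂ ω j := ∫ t : (Fin m → ℝ), Complex.exp (-Complex.I * Σ k, (ω k) * (t k)) * φ t j, and analogously φ̃̂ for φ̃. Then for every ω : Fin m → ℝ and every i : Fin m → Fin m, φ̃̂ ω i = Σ over j : Fin m → Fin m of (∏ k : Fin m, 𝒜̂ (ω k) (i k) (j k)) * φ̂ ω j. -/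

import Mathlib

open MeasureTheory

attribute [local instance] Matrix.normedAddCommGroup Matrix.normedSpace

/-!
Multiplying by a character `χ` distributes over convolution, `χ • (f ⋆ g) = (χ • f) ⋆ (χ • g)`,
because `χ x = χ (x - t) * χ t`; integrating, `f ↦ ∫ χ • f` turns convolutions into products.
The `j`-th term of the `m`-fold convolution is the ordinary convolution, on the product group, of
`φ · j` with the pure tensor `t ↦ ∏ k, 𝒜 k (t k) (i k) (j k)`, and the integral of a pure tensor
against a product character factors over the slots by Fubini's theorem.
-/

open scoped Convolution

section Character

variable {G E E' F : Type*} [MeasurableSpace G] [AddGroup G] {μ : Measure G}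
  [NormedAddCommGroup E] [NormedSpace ℂ E] [NormedAddCommGroup E'] [NormedSpace ℂ E']
  [NormedAddCommGroup F] [NormedSpace ℂ F]

theorem addChar_smul_convolution (χ : AddChar G Circle) (L : E →L[ℂ] E' →L[ℂ] F)
    (f : G → E) (g : G → E') (x : G) :
    χ x • (f ⋆[L, μ] g) x = ((fun t ↦ χ t • f t) ⋆[L, μ] fun t ↦ χ t • g t) x := by
  have χ_mul (t : G) : (χ (x - t) : ℂ) * χ t = χ x := by
    rw [← Circle.coe_mul, ← AddChar.map_add_eq_mul, sub_add_cancel]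
  simp only [convolution_def, Circle.smul_def, map_smul, smul_apply, smul_smul, χ_mul,
    integral_smul]

theorem integrable_addChar_smul {χ : AddChar G Circle} (hχ : Measurable fun x ↦ (χ x : ℂ))
    {f : G → E} (hf : Integrable f μ) : Integrable (fun x ↦ χ x • f x) μ :=
  hf.bdd_smul 1 hχ.aestronglyMeasurable (.of_forall fun x ↦ (Circle.norm_coe (χ x)).le)

theorem integral_addChar_smul_convolution [MeasurableAdd₂ G] [MeasurableNeg G] [SFinite μ]
    [μ.IsAddRightInvariant] [CompleteSpace E] [CompleteSpace E'] [CompleteSpace F]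
    {χ : AddChar G Circle} (hχ : Measurable fun x ↦ (χ x : ℂ)) (L : E →L[ℂ] E' →L[ℂ] F)
    {f : G → E} {g : G → E'} (hf : Integrable f μ) (hg : Integrable g μ) :
    ∫ x, χ x • (f ⋆[L, μ] g) x ∂μ = L (∫ x, χ x • f x ∂μ) (∫ x, χ x • g x ∂μ) := by
  simp only [addChar_smul_convolution]
  exact integral_convolution L (integrable_addChar_smul hχ hf) (integrable_addChar_smul hχ hg)

end Character

section ProductCharacter

variable {ι : Type*} [Fintype ι] {G : ι → Type*} [∀ k, AddMonoid (G k)]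

/-- The character `x ↦ ∏ k, χ k (x k)` of a product group; it is the kernel of the Fourier
transform in several variables. -/
def piAddChar {M : Type*} [CommMonoid M] (χ : ∀ k, AddChar (G k) M) : AddChar (∀ k, G k) M :=
  ∏ k, (χ k).compAddMonoidHom (Pi.evalAddMonoidHom G k)

theorem piAddChar_apply {M : Type*} [CommMonoid M] (χ : ∀ k, AddChar (G k) M) (x : ∀ k, G k) :
    piAddChar χ x = ∏ k, χ k (x k) := by
  simp [piAddChar]

theorem coe_piAddChar_apply (χ : ∀ k, AddChar (G k) Circle) (x : ∀ k, G k) :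
    (piAddChar χ x : ℂ) = ∏ k, (χ k (x k) : ℂ) := by
  rw [piAddChar_apply]
  exact map_prod Circle.coeHom _ _

variable [∀ k, MeasurableSpace (G k)]

theorem measurable_coe_piAddChar {χ : ∀ k, AddChar (G k) Circle}
    (hχ : ∀ k, Measurable fun x ↦ (χ k x : ℂ)) : Measurable fun x ↦ (piAddChar χ x : ℂ) := by
  simp only [coe_piAddChar_apply]
  exact Finset.measurable_fun_prod _ fun k _ ↦ (hχ k).comp (measurable_pi_apply k)

theorem integral_piAddChar_smul_prod {μ : ∀ k, Measure (G k)} [∀ k, SigmaFinite (μ k)]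
    (χ : ∀ k, AddChar (G k) Circle) (a : ∀ k, G k → ℂ) :
    ∫ x, piAddChar χ x • ∏ k, a k (x k) ∂Measure.pi μ = ∏ k, ∫ t, χ k t • a k t ∂μ k := by
  simp only [Circle.smul_def, smul_eq_mul, coe_piAddChar_apply, ← Finset.prod_mul_distrib]
  exact integral_fintype_prod_eq_prod fun k t ↦ (χ k t : ℂ) * a k t

end ProductCharacter

theorem integral_matrix_apply {X p n E : Type*} [MeasurableSpace X] {μ : Measure X}
    [Fintype p] [Fintype n] [NormedAddCommGroup E] [NormedSpace ℝ E] [CompleteSpace E]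
    {A : X → Matrix p n E} (hA : ∀ i j, Integrable (fun x ↦ A x i j) μ) (i : p) (j : n) :
    (∫ x, A x ∂μ) i j = ∫ x, A x i j ∂μ :=
  (congrFun (eval_integral (fun i ↦ .of_eval (hA i)) i) j).trans (eval_integral (hA i) j)

section MFoldConvolution

variable {ι : Type*} [Fintype ι] [DecidableEq ι] {G p n : ι → Type*} [∀ k, Fintype (n k)]

/-- The frequency-domain product `T ⊛_ω M`, in which the matrix `M k` acts on the `k`-th index
slot of the tensor `T`. The slots may have different, and the matrices rectangular, index types. -/
def multilinearProduct {R : Type*} [CommSemiring R] (M : ∀ k, Matrix (p k) (n k) R)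
    (T : (∀ k, n k) → R) (i : ∀ k, p k) : R :=
  ∑ j, (∏ k, M k (i k) (j k)) * T j

variable [∀ k, AddGroup (G k)] [∀ k, MeasurableSpace (G k)]

/-- The time-domain convolution `φ ⊛_t 𝒜` of a tensor function `φ` with one matrix function `𝒜 k`
per slot, where the `k`-th time variable ranges over a group `G k` with measure `μ k`. -/
noncomputable def mFoldConvolution (μ : ∀ k, Measure (G k)) (𝒜 : ∀ k, G k → Matrix (p k) (n k) ℂ)
    (φ : (∀ k, G k) → (∀ k, n k) → ℂ) (r : ∀ k, G k) (i : ∀ k, p k) : ℂ :=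
  ∑ j, ∫ t, (∏ k, 𝒜 k (r k - t k) (i k) (j k)) * φ t j ∂Measure.pi μ

theorem mFoldConvolution_eq_sum_convolution (μ : ∀ k, Measure (G k))
    (𝒜 : ∀ k, G k → Matrix (p k) (n k) ℂ) (φ : (∀ k, G k) → (∀ k, n k) → ℂ)
    (r : ∀ k, G k) (i : ∀ k, p k) :
    mFoldConvolution μ 𝒜 φ r i =
      ∑ j, ((φ · j) ⋆[ContinuousLinearMap.mul ℂ ℂ, Measure.pi μ]
        fun t ↦ ∏ k, 𝒜 k (t k) (i k) (j k)) r := by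
  simp only [mFoldConvolution, convolution_def, ContinuousLinearMap.mul_apply', Pi.sub_apply,
    mul_comm]

theorem fourier_of_m_fold_convolution_general [∀ k, Fintype (p k)]
    [∀ k, MeasurableAdd₂ (G k)] [∀ k, MeasurableNeg (G k)] {μ : ∀ k, Measure (G k)}
    [∀ k, SigmaFinite (μ k)] [∀ k, (μ k).IsAddRightInvariant]
    {𝒜 : ∀ k, G k → Matrix (p k) (n k) ℂ}
    (h𝒜 : ∀ k i j, Integrable (fun t ↦ 𝒜 k t i j) (μ k))
    {φ : (∀ k, G k) → (∀ k, n k) → ℂ} (hφ : ∀ j, Integrable (fun t ↦ φ t j) (Measure.pi μ))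
    {χ : ∀ k, AddChar (G k) Circle} (hχ : ∀ k, Measurable fun t ↦ (χ k t : ℂ))
    (i : ∀ k, p k) :
    ∫ r, piAddChar χ r • mFoldConvolution μ 𝒜 φ r i ∂Measure.pi μ =
      multilinearProduct (fun k ↦ ∫ t, χ k t • 𝒜 k t ∂μ k)
        (fun j ↦ ∫ t, piAddChar χ t • φ t j ∂Measure.pi μ) i := by
  have hχ_pi := measurable_coe_piAddChar hχ
  have h_tensor (j : ∀ k, n k) :
      Integrable (fun t ↦ ∏ k, 𝒜 k (t k) (i k) (j k)) (Measure.pi μ) :=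
    .fintype_prod_dep fun k ↦ h𝒜 k (i k) (j k)
  have h_entry (k : ι) (a : p k) (b : n k) :
      (∫ t, χ k t • 𝒜 k t ∂μ k) a b = ∫ t, χ k t • 𝒜 k t a b ∂μ k :=
    integral_matrix_apply (fun a b ↦ integrable_addChar_smul (hχ k) (h𝒜 k a b)) a b
  simp only [mFoldConvolution_eq_sum_convolution, Finset.smul_sum, multilinearProduct, h_entry]
  rw [integral_finsetSum _ fun j _ ↦
    integrable_addChar_smul hχ_pi ((hφ j).integrable_convolution _ (h_tensor j))]
  refine Finset.sum_congr rfl fun j _ ↦ ?_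
  rw [integral_addChar_smul_convolution hχ_pi _ (hφ j) (h_tensor j),
    integral_piAddChar_smul_prod χ fun k t ↦ 𝒜 k t (i k) (j k), ContinuousLinearMap.mul_apply',
    mul_comm]

end MFoldConvolution

/-- The character `t ↦ exp (-iωt)` of `ℝ`, the kernel of the unnormalized Fourier transform at
angular frequency `ω`. -/
noncomputable def angularAddChar (ω : ℝ) : AddChar ℝ Circle :=
  Real.probChar.mulShift (-ω)

theorem coe_angularAddChar (ω t : ℝ) :
    (angularAddChar ω t : ℂ) = Complex.exp (-Complex.I * ω * t) := by
  rw [angularAddChar, AddChar.mulShift_apply, Real.probChar_apply]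
  push_cast
  ring_nf

theorem measurable_coe_angularAddChar (ω : ℝ) : Measurable fun t ↦ (angularAddChar ω t : ℂ) := by
  simp only [coe_angularAddChar]
  fun_prop

theorem coe_piAddChar_angularAddChar {ι : Type*} [Fintype ι] (ω t : ι → ℝ) :
    (piAddChar (fun k ↦ angularAddChar (ω k)) t : ℂ) =
      Complex.exp (-Complex.I * ((∑ k, ω k * t k : ℝ) : ℂ)) := by
  simp only [coe_piAddChar_apply, coe_angularAddChar, ← Complex.exp_sum, mul_assoc,
    ← Finset.mul_sum, Complex.ofReal_sum, Complex.ofReal_mul]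

/-- **Eq. (28): the m-fold time-domain convolution becomes a frequency-domain
multilinear product under the m-dimensional Fourier transform.**
For an integrable matrix function `𝒜` and an integrable `m`-way `m`-dimensional tensor
function `φ`, the Fourier transform of the convolution `φ̃ = φ ⊛_t 𝒜` is obtained by
acting with `𝒜̂ (ω k)` on the `k`-th index slot of `φ̂ ω`. -/
theorem fourier_of_m_fold_convolution
    (m : ℕ) (hm : 0 < m)
    (𝒜 : ℝ → Matrix (Fin m) (Fin m) ℂ)
    (h𝒜 : ∀ i j : Fin m, Integrable (fun t : ℝ => 𝒜 t i j) volume)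
    (φ : (Fin m → ℝ) → (Fin m → Fin m) → ℂ)
    (hφ : ∀ j : Fin m → Fin m, Integrable (fun t : Fin m → ℝ => φ t j) volume)
    (φt : (Fin m → ℝ) → (Fin m → Fin m) → ℂ)
    (hφt : ∀ (r : Fin m → ℝ) (i : Fin m → Fin m),
      φt r i = ∑ j : Fin m → Fin m,
        ∫ t : Fin m → ℝ, (∏ k : Fin m, 𝒜 (r k - t k) (i k) (j k)) * φ t j)
    (𝒜hat : ℝ → Matrix (Fin m) (Fin m) ℂ)
    (h𝒜hat : ∀ ω : ℝ,
      𝒜hat ω = ∫ t : ℝ, Complex.exp (-Complex.I * (ω : ℂ) * (t : ℂ)) • 𝒜 t)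
    (φhat : (Fin m → ℝ) → (Fin m → Fin m) → ℂ)
    (hφhat : ∀ (ω : Fin m → ℝ) (j : Fin m → Fin m),
      φhat ω j = ∫ t : Fin m → ℝ,
        Complex.exp (-Complex.I * ((∑ k : Fin m, ω k * t k : ℝ) : ℂ)) * φ t j)
    (φthat : (Fin m → ℝ) → (Fin m → Fin m) → ℂ)
    (hφthat : ∀ (ω : Fin m → ℝ) (i : Fin m → Fin m),
      φthat ω i = ∫ t : Fin m → ℝ,
        Complex.exp (-Complex.I * ((∑ k : Fin m, ω k * t k : ℝ) : ℂ)) * φt t i) :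
    ∀ (ω : Fin m → ℝ) (i : Fin m → Fin m),
      φthat ω i = ∑ j : Fin m → Fin m, (∏ k : Fin m, 𝒜hat (ω k) (i k) (j k)) * φhat ω j := by
  intro ω i
  simp only [hφthat, hφt, hφhat, h𝒜hat, ← coe_piAddChar_angularAddChar, ← coe_angularAddChar]
  exact fourier_of_m_fold_convolution_general (fun _ ↦ h𝒜) hφ
    (fun k ↦ measurable_coe_angularAddChar (ω k)) i
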